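/- arXiv:2003.07648 — 3 statements merged into one kernel-verified Lean document; each statement's English description precedes it below -/
import Mathlib

section
/- Average Value-at-Risk bound: let α ∈ (0,1) satisfy φ(0)·α + φ(1/(1−α))·(1−α) ≤ β. Then AVaR_α(X) := (1/(1−α))·∫_α^1 F_X^{-1}(u) du ≤ ρ_{φ,β}(X) for every X ∈ L^ψ. -/
open MeasureTheory
open scoped ENNReal

noncomputable section

/-- A divergence function: convex, lower semicontinuous `φ : ℝ → ℝ ∪ {∞}` with `φ 1 = 0`,
effective domain `[0, ∞)` and superlinear growth `φ x / x → ∞` as `x → ∞`. -/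
structure IsDivergenceFunction (φ : ℝ → EReal) : Prop where
  convex : ∀ x y a b : ℝ, 0 < a → 0 < b → a + b = 1 →
    φ (a * x + b * y) ≤ (a : EReal) * φ x + (b : EReal) * φ y
  lsc : LowerSemicontinuous φ
  ne_bot : ∀ x : ℝ, φ x ≠ ⊥
  one : φ 1 = 0
  domain : ∀ x : ℝ, φ x ≠ ⊤ ↔ 0 ≤ x
  superlinear : ∀ M : ℝ, ∃ N : ℝ, ∀ x : ℝ, N ≤ x → ((M * x : ℝ) : EReal) ≤ φ x

/-- The convex conjugate `ψ(y) = sup_z (y·z − φ(z))`, as an extended real number. -/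
def psiE (φ : ℝ → EReal) (y : ℝ) : EReal := ⨆ z : ℝ, (((y * z : ℝ) : EReal) - φ z)

/-- The convex conjugate, as a real number (it is finite for divergence functions). -/
def psiR (φ : ℝ → EReal) (y : ℝ) : ℝ := (psiE φ y).toReal

open Classical in
/-- The objective `t (β + μ + E ψ(X/t − μ))` of the φ-divergence risk measure;
the value is `⊤` when `ψ(X/t − μ)` fails to be integrable. -/
def rhoObj {Ω : Type*} [MeasurableSpace Ω] (φ : ℝ → EReal) (β : ℝ) (P : Measure Ω)
    (X : Ω → ℝ) (μ t : ℝ) : EReal :=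
  if Integrable (fun ω => psiR φ (X ω / t - μ)) P then
    (((t * (β + μ + ∫ ω, psiR φ (X ω / t - μ) ∂P)) : ℝ) : EReal)
  else ⊤

/-- The φ-divergence risk measure `ρ_{φ,β}(X) = inf_{μ ∈ ℝ, t > 0} t (β + μ + E ψ(X/t − μ))`. -/
def rhoDiv {Ω : Type*} [MeasurableSpace Ω] (φ : ℝ → EReal) (β : ℝ) (P : Measure Ω)
    (X : Ω → ℝ) : EReal :=
  ⨅ (μ : ℝ) (t : ℝ) (_ : 0 < t), rhoObj φ β P X μ t

/-- The (generalized inverse) quantile function `F_X⁻¹(u) = inf { x : P(X ≤ x) ≥ u }`. -/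
def quantile {Ω : Type*} [MeasurableSpace Ω] (P : Measure Ω) (X : Ω → ℝ) (u : ℝ) : ℝ :=
  sInf {x : ℝ | u ≤ (P {ω | X ω ≤ x}).toReal}
variable {Ω : Type*} [MeasurableSpace Ω]

lemma aux_psiE_ne_top (φ : ℝ → EReal) (hφ : IsDivergenceFunction φ) (y : ℝ) : psiE φ y ≠ ⊤ := by
  obtain ⟨N, hN⟩ := hφ.superlinear y
  obtain ⟨z0, hz0, hmin⟩ := LowerSemicontinuousOn.exists_isMinOn (s := Set.Icc 0 (max N 0))
    (Set.nonempty_Icc.2 (le_max_right _ _)) isCompact_Icc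
    (hφ.lsc.lowerSemicontinuousOn _)
  have hz0t : φ z0 ≠ ⊤ := (hφ.domain z0).2 hz0.1
  obtain ⟨m, hm⟩ : ∃ m : ℝ, φ z0 = m := ⟨(φ z0).toReal, (EReal.coe_toReal hz0t (hφ.ne_bot _)).symm⟩
  have key : psiE φ y ≤ ((max 0 (|y| * max N 0 - m) : ℝ) : EReal) := by
    refine iSup_le fun z => ?_
    by_cases hz : 0 ≤ z
    · have hzt := (hφ.domain z).2 hz
      obtain ⟨r, hr⟩ : ∃ r : ℝ, φ z = r :=
        ⟨(φ z).toReal, (EReal.coe_toReal hzt (hφ.ne_bot _)).symm⟩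
      rw [hr, ← EReal.coe_sub, EReal.coe_le_coe_iff]
      by_cases hzN : N ≤ z
      · have := hN z hzN
        rw [hr, EReal.coe_le_coe_iff] at this
        exact le_max_of_le_left (by linarith)
      · have hzN' : z ≤ max N 0 := (le_of_not_ge hzN).trans (le_max_left _ _)
        have h1 : φ z0 ≤ φ z := hmin ⟨hz, hzN'⟩
        rw [hm, hr, EReal.coe_le_coe_iff] at h1
        have h2 : y * z ≤ |y| * max N 0 :=
          mul_le_mul (le_abs_self y) hzN' hz (abs_nonneg y)
        exact le_max_of_le_right (by linarith)
    · have : φ z = ⊤ := by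
        by_contra h
        exact hz ((hφ.domain z).1 h)
      rw [this]
      simp
  exact ne_top_of_le_ne_top (EReal.coe_ne_top _) key

lemma aux_psiR_ge (φ : ℝ → EReal) (hφ : IsDivergenceFunction φ) (y z : ℝ) (hz : 0 ≤ z) :
    y * z - (φ z).toReal ≤ psiR φ y := by
  have hzt := (hφ.domain z).2 hz
  have h : ((y * z - (φ z).toReal : ℝ) : EReal) ≤ psiE φ y := by
    rw [EReal.coe_sub, EReal.coe_toReal hzt (hφ.ne_bot _)]
    exact le_iSup (fun z : ℝ => (((y * z : ℝ) : EReal) - φ z)) z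
  have := EReal.toReal_le_toReal h (EReal.coe_ne_bot _) (aux_psiE_ne_top φ hφ y)
  rwa [EReal.toReal_coe] at this

lemma aux_psiR_meas (φ : ℝ → EReal) (hφ : IsDivergenceFunction φ) : Measurable (psiR φ) := by
  have h : LowerSemicontinuous (psiE φ) := by
    have : psiE φ = fun y => ⨆ z : ℝ, (((y * z : ℝ) : EReal) - φ z) := rfl
    rw [this]
    refine lowerSemicontinuous_iSup fun z => ?_
    apply Continuous.lowerSemicontinuous
    by_cases hz : φ z = ⊤
    · rw [hz]
      simp only [EReal.sub_top]
      exact continuous_const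
    · obtain ⟨r, hr⟩ : ∃ r : ℝ, φ z = r :=
        ⟨(φ z).toReal, (EReal.coe_toReal hz (hφ.ne_bot _)).symm⟩
      rw [hr]
      simp only [← EReal.coe_sub]
      exact continuous_coe_real_ereal.comp (by fun_prop)
  exact h.measurable.ereal_toReal

lemma aux_quantile_le (P : Measure Ω) [IsProbabilityMeasure P] (X : Ω → ℝ) (hX : AEMeasurable X P)
    (u : ℝ) (hu : u ∈ Set.Ioo (0 : ℝ) 1) (x : ℝ) :
    quantile P X u ≤ x ↔ u ≤ (P {ω | X ω ≤ x}).toReal := by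
  have : IsProbabilityMeasure (P.map X) := Measure.isProbabilityMeasure_map hX
  have hF : ∀ x, (P {ω | X ω ≤ x}).toReal = ProbabilityTheory.cdf (P.map X) x := by
    intro x
    rw [ProbabilityTheory.cdf_eq_real, Measure.real, Measure.map_apply_of_aemeasurable hX
      measurableSet_Iic]
    rfl
  unfold quantile
  simp only [hF]
  set F := ProbabilityTheory.cdf (P.map X)
  have hmono : Monotone F := ProbabilityTheory.monotone_cdf _
  have hbdd : BddBelow {x : ℝ | u ≤ F x} := by
    obtain ⟨b, hb⟩ := ((ProbabilityTheory.tendsto_cdf_atBot (P.map X)).eventually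
      (gt_mem_nhds hu.1)).exists
    refine ⟨b, fun x hx => ?_⟩
    by_contra hlt
    exact absurd (hx.trans (hmono (le_of_not_ge hlt))) (not_le.2 hb)
  have hne : {x : ℝ | u ≤ F x}.Nonempty := by
    obtain ⟨b, hb⟩ := ((ProbabilityTheory.tendsto_cdf_atTop (P.map X)).eventually
      (lt_mem_nhds hu.2)).exists
    exact ⟨b, hb.le⟩
  constructor
  · intro h
    have hright : Filter.Tendsto F (nhdsWithin x (Set.Ioi x)) (nhds (F x)) :=
      (F.right_continuous x).mono Set.Ioi_subset_Ici_self
    refine ge_of_tendsto hright ?_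
    filter_upwards [self_mem_nhdsWithin] with y hy
    obtain ⟨z, hz, hzy⟩ := exists_lt_of_csInf_lt hne (lt_of_le_of_lt h hy)
    exact le_trans hz (hmono hzy.le)
  · intro h
    exact csInf_le hbdd h

lemma aux_quantile_aemeas (P : Measure Ω) [IsProbabilityMeasure P] (X : Ω → ℝ)
    (hX : AEMeasurable X P) :
    AEMeasurable (quantile P X) (volume.restrict (Set.Ioo (0 : ℝ) 1)) := by
  apply aemeasurable_restrict_of_monotoneOn measurableSet_Ioo
  intro u hu v hv huv
  rw [aux_quantile_le P X hX u hu]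
  exact huv.trans ((aux_quantile_le P X hX v hv _).1 le_rfl)

lemma aux_quantile_map (P : Measure Ω) [IsProbabilityMeasure P] (X : Ω → ℝ)
    (hX : AEMeasurable X P) :
    (volume.restrict (Set.Ioo (0 : ℝ) 1)).map (quantile P X) = P.map X := by
  have : IsProbabilityMeasure (P.map X) := Measure.isProbabilityMeasure_map hX
  have hq := aux_quantile_aemeas P X hX
  apply Measure.ext_of_Iic
  intro x
  rw [Measure.map_apply_of_aemeasurable hq measurableSet_Iic,
    Measure.map_apply_of_aemeasurable hX measurableSet_Iic,
    Measure.restrict_apply' measurableSet_Ioo]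
  have hset : quantile P X ⁻¹' Set.Iic x ∩ Set.Ioo 0 1
      = Set.Iic (P {ω | X ω ≤ x}).toReal ∩ Set.Ioo 0 1 := by
    ext u
    constructor
    · rintro ⟨h, hu⟩
      exact ⟨(aux_quantile_le P X hX u hu x).1 h, hu⟩
    · rintro ⟨h, hu⟩
      exact ⟨(aux_quantile_le P X hX u hu x).2 h, hu⟩
  have hle : (P {ω | X ω ≤ x}).toReal ≤ 1 := by
    simpa [Measure.real] using (measureReal_le_one : P.real {ω | X ω ≤ x} ≤ 1)
  have hX' : X ⁻¹' Set.Iic x = {ω | X ω ≤ x} := rfl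
  have hP : P {ω | X ω ≤ x} = ENNReal.ofReal (P {ω | X ω ≤ x}).toReal :=
    (ENNReal.ofReal_toReal (measure_ne_top P {ω | X ω ≤ x})).symm
  refine Eq.trans ?_ hP.symm
  rw [hset]
  set c := (P {ω | X ω ≤ x}).toReal
  apply le_antisymm
  · calc volume (Set.Iic c ∩ Set.Ioo 0 1) ≤ volume (Set.Ioc 0 c) :=
        measure_mono fun u hu => ⟨hu.2.1, hu.1⟩
      _ = _ := by simp
  · calc ENNReal.ofReal c = volume (Set.Ioo 0 c) := by simp
      _ ≤ volume (Set.Iic c ∩ Set.Ioo 0 1) := measure_mono fun u hu => ⟨hu.2.le, hu.1, hu.2.trans_le hle⟩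


/-- Average Value-at-Risk bound: if `α ∈ (0,1)` satisfies
`φ(0)·α + φ(1/(1−α))·(1−α) ≤ β`, then `AVaR_α(X) ≤ ρ_{φ,β}(X)` for every `X ∈ L^ψ`. -/
theorem avar_le_rhoDiv (P : Measure Ω) [IsProbabilityMeasure P]
    (φ : ℝ → EReal) (hφ : IsDivergenceFunction φ) (β : ℝ) (hβ : 0 < β)
    (α : ℝ) (hα0 : 0 < α) (hα1 : α < 1)
    (hcond : (φ 0).toReal * α + (φ (1 / (1 - α))).toReal * (1 - α) ≤ β)
    (X : Ω → ℝ) (hX : Integrable X P)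
    (hXpsi : ∃ t : ℝ, 0 < t ∧ Integrable (fun ω => psiR φ (t * |X ω|)) P) :
    (((1 / (1 - α)) * ∫ u in Set.Ioo α 1, quantile P X u : ℝ) : EReal) ≤
      rhoDiv φ β P X := by
  have hXm : AEMeasurable X P := hX.aemeasurable
  refine le_iInf fun μ => le_iInf fun t => le_iInf fun ht => ?_
  unfold rhoObj
  split_ifs with hint
  swap
  · exact le_top
  rw [EReal.coe_le_coe_iff]
  have hq := aux_quantile_aemeas P X hXm
  have hmap := aux_quantile_map P X hXm
  have hg : Measurable fun x : ℝ => psiR φ (x / t - μ) :=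
    (aux_psiR_meas φ hφ).comp (by fun_prop)
  have hqint : IntegrableOn (quantile P X) (Set.Ioo 0 1) := by
    have h1 : Integrable (fun x : ℝ => x) (P.map X) :=
      (integrable_map_measure (by fun_prop) hXm).2 hX
    rw [← hmap] at h1
    exact (integrable_map_measure (by fun_prop) hq).1 h1
  have hgint : IntegrableOn (fun u => psiR φ (quantile P X u / t - μ)) (Set.Ioo 0 1) := by
    have h1 : Integrable (fun x : ℝ => psiR φ (x / t - μ)) (P.map X) :=
      (integrable_map_measure hg.aestronglyMeasurable hXm).2 hint
    rw [← hmap] at h1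
    exact (integrable_map_measure hg.aestronglyMeasurable hq).1 h1
  have heq : ∫ ω, psiR φ (X ω / t - μ) ∂P
      = ∫ u in Set.Ioo 0 1, psiR φ (quantile P X u / t - μ) := by
    rw [← integral_map hXm (f := fun x : ℝ => psiR φ (x / t - μ)) hg.aestronglyMeasurable,
      ← hmap, integral_map hq hg.aestronglyMeasurable]
  have hsub1 : Set.Ioc 0 α ⊆ Set.Ioo 0 1 := fun u hu => ⟨hu.1, hu.2.trans_lt hα1⟩
  have hsub2 : Set.Ioo α 1 ⊆ Set.Ioo 0 1 := fun u hu => ⟨hα0.trans hu.1, hu.2⟩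
  have hdisj : Disjoint (Set.Ioc 0 α) (Set.Ioo α 1) :=
    Set.disjoint_left.2 fun u hu hu' => absurd hu'.1 (not_lt.2 hu.2)
  rw [heq, ← Set.Ioc_union_Ioo_eq_Ioo hα0.le hα1, setIntegral_union hdisj measurableSet_Ioo
    (hgint.mono_set hsub1) (hgint.mono_set hsub2)]
  have ha : 0 < 1 - α := by linarith
  set z := 1 / (1 - α) with hz
  have hz0 : 0 ≤ z := by positivity
  have hza : z * (1 - α) = 1 := by rw [hz]; field_simp
  have i1 : -(φ 0).toReal * α ≤ ∫ u in Set.Ioc 0 α, psiR φ (quantile P X u / t - μ) := by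
    have h : ∫ u in Set.Ioc 0 α, (-(φ 0).toReal)
        ≤ ∫ u in Set.Ioc 0 α, psiR φ (quantile P X u / t - μ) := by
      refine setIntegral_mono (integrableOn_const (by simp)) (hgint.mono_set hsub1) fun u => ?_
      have := aux_psiR_ge φ hφ (quantile P X u / t - μ) 0 le_rfl
      simpa using this
    rw [setIntegral_const] at h
    simpa [Measure.real, hα0.le, mul_comm] using h
  have i2 : (z / t) * (∫ u in Set.Ioo α 1, quantile P X u)
      + (-(μ * z) - (φ z).toReal) * (1 - α)
      ≤ ∫ u in Set.Ioo α 1, psiR φ (quantile P X u / t - μ) := by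
    have hqi : IntegrableOn (fun u => (z / t) * quantile P X u) (Set.Ioo α 1) :=
      (hqint.mono_set hsub2).const_mul _
    have hci : IntegrableOn (fun _ : ℝ => (-(μ * z) - (φ z).toReal)) (Set.Ioo α 1) :=
      integrableOn_const (by simp)
    have h : ∫ u in Set.Ioo α 1, ((z / t) * quantile P X u + (-(μ * z) - (φ z).toReal))
        ≤ ∫ u in Set.Ioo α 1, psiR φ (quantile P X u / t - μ) := by
      refine setIntegral_mono (hqi.add hci) (hgint.mono_set hsub2) fun u => ?_
      have := aux_psiR_ge φ hφ (quantile P X u / t - μ) z hz0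
      refine le_trans (le_of_eq ?_) this
      ring
    rw [integral_add hqi hci, integral_const_mul, setIntegral_const] at h
    simpa [Measure.real, ha.le, mul_comm] using h
  set A := ∫ u in Set.Ioo α 1, quantile P X u
  set I1 := ∫ u in Set.Ioc 0 α, psiR φ (quantile P X u / t - μ)
  set I2 := ∫ u in Set.Ioo α 1, psiR φ (quantile P X u / t - μ)
  have hfin : z / t * A ≤ β + μ + (I1 + I2) := by
    have : (-(μ * z) - (φ z).toReal) * (1 - α) = -μ - (φ z).toReal * (1 - α) := by
      linear_combination (-μ) * hza
    linarith
  calc z * A = t * (z / t * A) := by field_simp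
    _ ≤ _ := mul_le_mul_of_nonneg_left hfin ht.le
end
end

section
/- Characterizing equations: let X ∈ L^ψ and let ψ′ : ℝ → ℝ be a subderivative of ψ, i.e., ψ′(x)·(z − x) ≤ ψ(z) − ψ(x) for all x, z ∈ ℝ. Suppose μ* ∈ ℝ and t* > 0 satisfy E[ψ′(X/t* − μ*)] = 1 and E[φ(ψ′(X/t* − μ*))] = β. Then Z* := ψ′(X/t* − μ*) satisfies Z* ≥ 0 a.s., E[Z*] = 1 and E[φ(Z*)] ≤ β, and E[X·Z*] = sup{E[X·Z] : Z ≥ 0, E[Z] = 1, E[φ(Z)] ≤ β} = t*·(β + μ* + E[ψ(X/t* − μ*)]) = ρ_{φ,β}(X); in particular, μ* and t* attain the infimum in the definition of ρ_{φ,β}(X). -/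
open MeasureTheory
open scoped ENNReal

noncomputable section

/-- The dual set of the φ-divergence risk measure: values `E[X·Z]` for densities
`Z ≥ 0` with `E Z = 1` and `E φ(Z) ≤ β`. -/
def dualSet {Ω : Type*} [MeasurableSpace Ω] (φ : ℝ → EReal) (β : ℝ) (P : Measure Ω)
    (X : Ω → ℝ) : Set EReal :=
  {v | ∃ Z : Ω → ℝ, Integrable Z P ∧ (∀ᵐ ω ∂P, 0 ≤ Z ω) ∧ (∫ ω, Z ω ∂P) = 1 ∧
    Integrable (fun ω => (φ (Z ω)).toReal) P ∧ (∫ ω, (φ (Z ω)).toReal ∂P) ≤ β ∧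
    Integrable (fun ω => X ω * Z ω) P ∧ v = ((∫ ω, X ω * Z ω ∂P : ℝ) : EReal)}
lemma phi_coe {φ : ℝ → EReal} (hφ : IsDivergenceFunction φ) {z : ℝ} (hz : 0 ≤ z) :
    φ z = (((φ z).toReal : ℝ) : EReal) :=
  (EReal.coe_toReal ((hφ.domain z).2 hz) (hφ.ne_bot z)).symm

lemma phi_top {φ : ℝ → EReal} (hφ : IsDivergenceFunction φ) {z : ℝ} (hz : z < 0) :
    φ z = ⊤ := by
  by_contra h
  exact absurd ((hφ.domain z).1 h) (not_le.2 hz)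

lemma psiE_le {φ : ℝ → EReal} (hφ : IsDivergenceFunction φ) {y u : ℝ}
    (h : ∀ z : ℝ, 0 ≤ z → y * z - (φ z).toReal ≤ u) : psiE φ y ≤ (u : EReal) := by
  refine iSup_le fun z => ?_
  rcases lt_or_ge z 0 with hz | hz
  · rw [phi_top hφ hz]; simp
  · rw [phi_coe hφ hz, ← EReal.coe_sub]
    exact_mod_cast h z hz

lemma le_psiE {φ : ℝ → EReal} (hφ : IsDivergenceFunction φ) (y : ℝ) {z : ℝ} (hz : 0 ≤ z) :
    ((y * z - (φ z).toReal : ℝ) : EReal) ≤ psiE φ y := by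
  have := le_iSup (fun z : ℝ => (((y * z : ℝ) : EReal) - φ z)) z
  rw [EReal.coe_sub, ← phi_coe hφ hz]
  exact this

lemma psiE_ne_top {φ : ℝ → EReal} (hφ : IsDivergenceFunction φ) (y : ℝ) : psiE φ y ≠ ⊤ := by
  obtain ⟨N, hN⟩ := hφ.superlinear y
  obtain ⟨a, ha, hmin⟩ := LowerSemicontinuousOn.exists_isMinOn (f := φ)
    (s := Set.Icc 0 (max N 0)) ⟨0, by simp⟩ isCompact_Icc (hφ.lsc.lowerSemicontinuousOn _)
  have key : psiE φ y ≤ ((max 0 (|y| * max N 0 - (φ a).toReal) : ℝ) : EReal) := by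
    refine psiE_le hφ fun z hz => ?_
    rcases le_total z (max N 0) with h | h
    · have h1 : φ a ≤ φ z := hmin ⟨hz, h⟩
      rw [phi_coe hφ hz, phi_coe hφ ha.1, EReal.coe_le_coe_iff] at h1
      refine le_max_of_le_right ?_
      have h2 : y * z ≤ |y| * max N 0 :=
        mul_le_mul (le_abs_self y) h hz (abs_nonneg y)
      linarith
    · have h1 := hN z (le_trans (le_max_left _ _) h)
      rw [phi_coe hφ hz, EReal.coe_le_coe_iff] at h1
      refine le_max_of_le_left ?_
      linarith
  exact ne_top_of_le_ne_top (EReal.coe_ne_top _) key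

lemma psi_coe {φ : ℝ → EReal} (hφ : IsDivergenceFunction φ) (y : ℝ) :
    ((psiR φ y : ℝ) : EReal) = psiE φ y := by
  refine EReal.coe_toReal (psiE_ne_top hφ y) ?_
  exact ne_bot_of_le_ne_bot (EReal.coe_ne_bot _) (le_psiE hφ y zero_le_one)

lemma fenchel {φ : ℝ → EReal} (hφ : IsDivergenceFunction φ) (y : ℝ) {z : ℝ} (hz : 0 ≤ z) :
    y * z ≤ psiR φ y + (φ z).toReal := by
  have h := le_psiE hφ y hz
  rw [← psi_coe hφ, EReal.coe_le_coe_iff] at h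
  linarith

lemma psiR_le {φ : ℝ → EReal} (hφ : IsDivergenceFunction φ) {y u : ℝ}
    (h : ∀ z : ℝ, 0 ≤ z → y * z - (φ z).toReal ≤ u) : psiR φ y ≤ u := by
  have := psiE_le hφ h
  rwa [← psi_coe hφ, EReal.coe_le_coe_iff] at this

lemma epi_convex {φ : ℝ → EReal} (hφ : IsDivergenceFunction φ) :
    Convex ℝ {p : ℝ × ℝ | φ p.1 ≤ (p.2 : EReal)} := by
  rw [convex_iff_forall_pos]
  rintro ⟨x, r⟩ hx ⟨y, s⟩ hy a b ha hb hab
  simp only [Set.mem_ofPred_eq, Prod.smul_mk, Prod.mk_add_mk, smul_eq_mul] at *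
  have hx0 : 0 ≤ x := (hφ.domain x).1 (ne_top_of_le_ne_top (EReal.coe_ne_top _) hx)
  have hy0 : 0 ≤ y := (hφ.domain y).1 (ne_top_of_le_ne_top (EReal.coe_ne_top _) hy)
  refine (hφ.convex x y a b ha hb hab).trans ?_
  rw [phi_coe hφ hx0, EReal.coe_le_coe_iff] at hx
  rw [phi_coe hφ hy0, EReal.coe_le_coe_iff] at hy
  rw [phi_coe hφ hx0, phi_coe hφ hy0]
  norm_cast
  gcongr

lemma epi_closed {φ : ℝ → EReal} (hφ : IsDivergenceFunction φ) :
    IsClosed {p : ℝ × ℝ | φ p.1 ≤ (p.2 : EReal)} := by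
  have h := hφ.lsc.isClosed_epigraph
  exact h.preimage (f := fun p : ℝ × ℝ => (p.1, (p.2 : EReal)))
    (continuous_fst.prodMk (continuous_coe_real_ereal.comp continuous_snd))

/-- Fenchel equality at a subgradient. -/
lemma fenchel_eq {φ : ℝ → EReal} (hφ : IsDivergenceFunction φ) {x Z : ℝ} (hZ : 0 ≤ Z)
    (hsub : ∀ z : ℝ, Z * (z - x) ≤ psiR φ z - psiR φ x) :
    x * Z = psiR φ x + (φ Z).toReal := by
  refine le_antisymm (fenchel hφ x hZ) ?_
  by_contra! hlt
  have hnot : (Z, x * Z - psiR φ x) ∉ {p : ℝ × ℝ | φ p.1 ≤ (p.2 : EReal)} := by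
    simp only [Set.mem_ofPred_eq]
    rw [phi_coe hφ hZ, EReal.coe_le_coe_iff]
    linarith
  obtain ⟨f, u, hf, hu⟩ := geometric_hahn_banach_closed_point (epi_convex hφ) (epi_closed hφ) hnot
  have hlin : ∀ p q : ℝ, f (p, q) = p * f (1, 0) + q * f (0, 1) := by
    intro p q
    have : ((p, q) : ℝ × ℝ) = p • ((1, 0) : ℝ × ℝ) + q • ((0, 1) : ℝ × ℝ) := by simp
    rw [this, map_add, map_smul, map_smul]; simp
  set a := f (1, 0)
  set b := f (0, 1)
  have hepi : ∀ z : ℝ, 0 ≤ z → z * a + (φ z).toReal * b < u := by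
    intro z hz
    rw [← hlin]
    exact hf _ (by simp only [Set.mem_ofPred_eq]; exact (phi_coe hφ hz).le)
  rw [hlin] at hu
  have hZe := hepi Z hZ
  have hb : b < 0 := by
    by_contra! hb
    nlinarith
  have hb0 : b ≠ 0 := hb.ne
  have hy : psiR φ (a / (-b)) ≤ u / (-b) := by
    refine psiR_le hφ fun z hz => ?_
    rw [le_div_iff₀ (by linarith)]
    have := hepi z hz
    have e : (a / (-b) * z - (φ z).toReal) * (-b) = z * a + (φ z).toReal * b := by
      field_simp; ring
    linarith
  have h1 := hsub (a / (-b))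
  have h2 : u / (-b) < Z * (a / (-b)) - (x * Z - psiR φ x) := by
    rw [div_lt_iff₀ (by linarith)]
    have e : (Z * (a / (-b)) - (x * Z - psiR φ x)) * (-b)
      = Z * a + (x * Z - psiR φ x) * b := by field_simp; ring
    linarith
  nlinarith

lemma weak_duality {Ω : Type*} [MeasurableSpace Ω] (P : Measure Ω) [IsProbabilityMeasure P]
    (φ : ℝ → EReal) (hφ : IsDivergenceFunction φ) (β : ℝ) (X : Ω → ℝ) (v : EReal)
    (hv : v ∈ dualSet φ β P X) (m s : ℝ) (hs : 0 < s) : v ≤ rhoObj φ β P X m s := by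
  obtain ⟨Z, hZi, hZ0, hZ1, hfi, hfβ, hXZ, rfl⟩ := hv
  unfold rhoObj
  split_ifs with hI
  · rw [EReal.coe_le_coe_iff]
    have h : ∫ ω, X ω * Z ω ∂P
        ≤ ∫ ω, (s * (psiR φ (X ω / s - m) + (φ (Z ω)).toReal) + s * m * Z ω) ∂P := by
      refine integral_mono_ae hXZ (((hI.add hfi).const_mul s).add (hZi.const_mul (s * m))) ?_
      filter_upwards [hZ0] with ω h0
      have h1 := mul_le_mul_of_nonneg_left (fenchel hφ (X ω / s - m) h0) hs.le
      have e : s * ((X ω / s - m) * Z ω) = X ω * Z ω - s * m * Z ω := by field_simp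
      linarith
    rw [integral_add ((hI.fun_add hfi).const_mul s) (hZi.const_mul (s * m)),
      integral_const_mul, integral_add hI hfi, integral_const_mul, hZ1] at h
    nlinarith
  · exact le_top

variable {Ω : Type*} [MeasurableSpace Ω]

/-- Characterizing equations: if `μ*` and `t* > 0` solve `E[ψ′(X/t* − μ*)] = 1` and
`E[φ(ψ′(X/t* − μ*))] = β`, then `Z* = ψ′(X/t* − μ*)` is feasible and optimal in the dual
representation, `E[X·Z*] = sup dualSet = t*(β + μ* + E ψ(X/t* − μ*)) = ρ_{φ,β}(X)`;
in particular `μ*` and `t*` attain the infimum defining `ρ_{φ,β}(X)`. -/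
theorem characterizing_equations (P : Measure Ω) [IsProbabilityMeasure P]
    (φ : ℝ → EReal) (hφ : IsDivergenceFunction φ) (β : ℝ) (hβ : 0 < β)
    (X : Ω → ℝ) (hX : Integrable X P)
    (hXpsi : ∃ t : ℝ, 0 < t ∧ Integrable (fun ω => psiR φ (t * |X ω|)) P)
    (ψ' : ℝ → ℝ) (hsub : ∀ x z : ℝ, ψ' x * (z - x) ≤ psiR φ z - psiR φ x)
    (μ t : ℝ) (ht : 0 < t)
    (hZint : Integrable (fun ω => ψ' (X ω / t - μ)) P)
    (hZ1 : (∫ ω, ψ' (X ω / t - μ) ∂P) = 1)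
    (hfin : ∀ᵐ ω ∂P, φ (ψ' (X ω / t - μ)) ≠ ⊤)
    (hφint : Integrable (fun ω => (φ (ψ' (X ω / t - μ))).toReal) P)
    (hφβ : (∫ ω, (φ (ψ' (X ω / t - μ))).toReal ∂P) = β) :
    (∀ᵐ ω ∂P, 0 ≤ ψ' (X ω / t - μ)) ∧
    Integrable (fun ω => X ω * ψ' (X ω / t - μ)) P ∧
    ((∫ ω, X ω * ψ' (X ω / t - μ) ∂P : ℝ) : EReal) = sSup (dualSet φ β P X) ∧
    ((∫ ω, X ω * ψ' (X ω / t - μ) ∂P : ℝ) : EReal) = rhoObj φ β P X μ t ∧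
    rhoObj φ β P X μ t = rhoDiv φ β P X := by
  have hZ0 : ∀ᵐ ω ∂P, 0 ≤ ψ' (X ω / t - μ) := hfin.mono fun ω h => (hφ.domain _).1 h
  have hEq : ∀ᵐ ω ∂P, (X ω / t - μ) * ψ' (X ω / t - μ)
      = psiR φ (X ω / t - μ) + (φ (ψ' (X ω / t - μ))).toReal :=
    hZ0.mono fun ω h => fenchel_eq hφ h (hsub _)
  have hXZ : Integrable (fun ω => X ω * ψ' (X ω / t - μ)) P := by
    obtain ⟨s, hs, hsI⟩ := hXpsi
    refine Integrable.mono' ((hsI.add hφint).const_mul s⁻¹)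
      (hX.aestronglyMeasurable.mul hZint.aestronglyMeasurable) ?_
    filter_upwards [hZ0] with ω h0
    have h1 := fenchel hφ (s * |X ω|) h0
    rw [Real.norm_eq_abs, abs_mul, abs_of_nonneg h0]
    simp only [Pi.add_apply]
    rw [inv_mul_eq_div, le_div_iff₀ hs]
    linarith
  have hYZ : Integrable (fun ω => (X ω / t - μ) * ψ' (X ω / t - μ)) P := by
    refine ((hXZ.div_const t).sub (hZint.const_mul μ)).congr (Filter.Eventually.of_forall fun ω => ?_)
    simp only [Pi.sub_apply]
    ring
  have hψ : Integrable (fun ω => psiR φ (X ω / t - μ)) P := by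
    refine (hYZ.sub hφint).congr ?_
    filter_upwards [hEq] with ω h
    simp only [Pi.sub_apply]
    linarith
  have hval : ∫ ω, X ω * ψ' (X ω / t - μ) ∂P
      = t * (β + μ + ∫ ω, psiR φ (X ω / t - μ) ∂P) := by
    have h : ∫ ω, X ω * ψ' (X ω / t - μ) ∂P
        = ∫ ω, (t * (psiR φ (X ω / t - μ) + (φ (ψ' (X ω / t - μ))).toReal)
          + t * μ * ψ' (X ω / t - μ)) ∂P := by
      refine integral_congr_ae ?_
      filter_upwards [hEq] with ω h
      rw [← h]
      field_simp
      ring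
    rw [integral_add ((hψ.fun_add hφint).const_mul t) (hZint.const_mul (t * μ)),
      integral_const_mul, integral_add hψ hφint, integral_const_mul, hZ1, hφβ] at h
    rw [h]; ring
  have hobj : ((∫ ω, X ω * ψ' (X ω / t - μ) ∂P : ℝ) : EReal) = rhoObj φ β P X μ t := by
    rw [rhoObj, if_pos hψ, hval]
  have hmem : ((∫ ω, X ω * ψ' (X ω / t - μ) ∂P : ℝ) : EReal) ∈ dualSet φ β P X :=
    ⟨_, hZint, hZ0, hZ1, hφint, hφβ.le, hXZ, rfl⟩
  refine ⟨hZ0, hXZ, le_antisymm (le_sSup hmem) (sSup_le fun v hv => ?_), hobj,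
    le_antisymm ?_ ?_⟩
  · rw [hobj]; exact weak_duality P φ hφ β X v hv μ t ht
  · rw [← hobj]
    exact le_iInf fun m => le_iInf fun s => le_iInf fun hs =>
      weak_duality P φ hφ β X _ hmem m s hs
  · exact iInf_le_of_le μ (iInf_le_of_le t (iInf_le _ ht))
end
end

section
/- Solvability of the characterizing equations: let X ∈ M^ψ with X ≥ 0 a.s., let φ satisfy the Δ₂-condition, and suppose the infimum in ρ_{φ,β}(X) = inf_{μ∈ℝ, t>0} t·(β + μ + E[ψ(X/t − μ)]) is attained at t* > 0 and μ* ∈ ℝ. If ψ is differentiable, then t* and μ* solve E[ψ′(X/t* − μ*)] = 1 and E[φ(ψ′(X/t* − μ*))] = β with ψ′ the derivative of ψ. If instead X is continuously distributed (P(X = x) = 0 for every x ∈ ℝ), then t* and μ* solve these two equations for every subderivative ψ′ of ψ (i.e., every ψ′ : ℝ → ℝ with ψ′(x)·(z − x) ≤ ψ(z) − ψ(x) for all x, z ∈ ℝ). -/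
open MeasureTheory
open scoped ENNReal

noncomputable section

/-- The Δ₂-condition: `φ(2x) ≤ k·φ(x)` for all `x > T`, for some `T, k ≥ 0`. -/
def DeltaTwo (φ : ℝ → EReal) : Prop :=
  ∃ T k : ℝ, 0 ≤ T ∧ 0 ≤ k ∧ ∀ x : ℝ, T < x → φ (2 * x) ≤ (k : EReal) * φ x
variable {Ω : Type*} [MeasurableSpace Ω]

/-- The conjugate is attained, and the Fenchel inequality holds. -/
lemma aux_attained (φ : ℝ → EReal) (hφ : IsDivergenceFunction φ) (y : ℝ) :
    (∃ z : ℝ, 0 ≤ z ∧ psiR φ y = y * z - (φ z).toReal) ∧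
    ∀ w : ℝ, 0 ≤ w → y * w - (φ w).toReal ≤ psiR φ y := by
  have hreal : ∀ w : ℝ, 0 ≤ w → ((φ w).toReal : EReal) = φ w := fun w hw =>
    EReal.coe_toReal ((hφ.domain w).2 hw) (hφ.ne_bot w)
  have htop : ∀ w : ℝ, w < 0 → φ w = ⊤ := fun w hw => by
    by_contra h
    exact absurd ((hφ.domain w).1 h) (not_le.2 hw)
  have hone : (φ 1).toReal = 0 := by rw [hφ.one]; simp
  obtain ⟨N, hN⟩ := hφ.superlinear (y + |y|)
  set R := max N 1 with hR
  have hlsc : LowerSemicontinuousOn (fun z => φ z + ((-(y * z) : ℝ) : EReal))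
      (Set.Icc (0 : ℝ) R) := by
    apply LowerSemicontinuousOn.add' (hφ.lsc.lowerSemicontinuousOn _)
    · apply Continuous.lowerSemicontinuous _ |>.lowerSemicontinuousOn _
      exact continuous_coe_real_ereal.comp (by fun_prop)
    · intro x _
      exact EReal.continuousAt_add (Or.inr (EReal.coe_ne_bot _)) (Or.inr (EReal.coe_ne_top _))
  have h1R : (1 : ℝ) ≤ R := le_max_right _ _
  obtain ⟨z, hz, hmin⟩ := LowerSemicontinuousOn.exists_isMinOn
    ⟨1, by constructor <;> linarith⟩ isCompact_Icc hlsc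
  have hmin' : ∀ w : ℝ, 0 ≤ w → w ≤ R → y * w - (φ w).toReal ≤ y * z - (φ z).toReal := by
    intro w h0 hwR
    have h := hmin (show w ∈ Set.Icc (0 : ℝ) R from ⟨h0, hwR⟩)
    simp only [Set.mem_ofPred_eq] at h
    rw [← hreal w h0, ← hreal z hz.1, ← EReal.coe_add, ← EReal.coe_add, EReal.coe_le_coe_iff] at h
    linarith
  have hall : ∀ w : ℝ, 0 ≤ w → y * w - (φ w).toReal ≤ y * z - (φ z).toReal := by
    intro w h0
    rcases le_total w R with h | h
    · exact hmin' w h0 h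
    · have h1 := hmin' 1 zero_le_one h1R
      have h2 := hN w ((le_max_left _ _).trans h)
      rw [← hreal w h0, EReal.coe_le_coe_iff] at h2
      have h3 : |y| * 1 ≤ |y| * w := mul_le_mul_of_nonneg_left (h1R.trans h) (abs_nonneg y)
      have h4 := neg_abs_le y
      nlinarith
  have hE : psiE φ y = ((y * z - (φ z).toReal : ℝ) : EReal) := by
    apply le_antisymm
    · apply iSup_le
      intro w
      rcases lt_or_ge w 0 with h | h
      · rw [htop w h]; simp
      · rw [← hreal w h, ← EReal.coe_sub, EReal.coe_le_coe_iff]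
        exact hall w h
    · have := le_iSup (fun z : ℝ => (((y * z : ℝ) : EReal) - φ z)) z
      rw [EReal.coe_sub, hreal z hz.1]
      exact this
  have hp : psiR φ y = y * z - (φ z).toReal := by
    rw [psiR, hE, EReal.toReal_coe]
  exact ⟨⟨z, hz.1, hp⟩, fun w hw => hp ▸ hall w hw⟩

lemma aux_mono (f g : ℝ → ℝ) (h : ∀ x z, g x * (z - x) ≤ f z - f x) : Monotone g := by
  intro x z hxz
  rcases hxz.eq_or_lt with rfl | hlt
  · exact le_rfl
  have h1 := h x z
  have h2 := h z x
  by_contra hc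
  push Not at hc
  nlinarith [mul_pos (sub_pos.2 hc) (sub_pos.2 hlt)]

lemma aux_lip (f g : ℝ → ℝ) (h : ∀ x z, g x * (z - x) ≤ f z - f x) (x z : ℝ)
    (hx : x ∈ Set.Icc (-1 : ℝ) 1) (hz : z ∈ Set.Icc (-1 : ℝ) 1) :
    |f x - f z| ≤ (|f 2 - f 1| + |f (-1) - f (-2)|) * |x - z| := by
  have hm := aux_mono f g h
  have hb : ∀ w ∈ Set.Icc (-1 : ℝ) 1, |g w| ≤ |f 2 - f 1| + |f (-1) - f (-2)| := by
    intro w hw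
    have h1 := hm hw.2
    have h2 := hm hw.1
    have h3 := h 1 2
    have h4 := h (-1) (-2)
    have h5 := le_abs_self (f 2 - f 1)
    have h6 := neg_abs_le (f (-1) - f (-2))
    have h7 := abs_nonneg (f 2 - f 1)
    have h8 := abs_nonneg (f (-1) - f (-2))
    rw [abs_le]
    constructor <;> linarith
  have key : ∀ w ∈ Set.Icc (-1 : ℝ) 1, ∀ v : ℝ,
      f w - f v ≤ (|f 2 - f 1| + |f (-1) - f (-2)|) * |w - v| := by
    intro w hw v
    have h1 := h w v
    have h2 : g w * (w - v) ≤ |g w| * |w - v| := by rw [← abs_mul]; exact le_abs_self _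
    have h3 := mul_le_mul_of_nonneg_right (hb w hw) (abs_nonneg (w - v))
    linarith
  rw [abs_le]
  have k1 := key x hx z
  have k2 := key z hz x
  rw [abs_sub_comm z x] at k2
  constructor <;> linarith

lemma aux_uniq (f : ℝ → ℝ) (y d z : ℝ) (hd : HasDerivAt f d y)
    (h : ∀ w, z * (w - y) ≤ f w - f y) : d = z := by
  have hmin : IsLocalMin (fun w => f w - z * w) y := by
    refine Filter.Eventually.of_forall fun w => ?_
    have := h w
    simp only
    linarith
  have h1 : HasDerivAt (fun w => f w - z * w) (d - z * 1) y :=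
    hd.sub ((hasDerivAt_id y).const_mul z)
  have := hmin.hasDerivAt_eq_zero h1
  linarith

lemma aux_hasDeriv (f g : ℝ → ℝ) (h : ∀ x z, g x * (z - x) ≤ f z - f x) (x : ℝ)
    (hc : ContinuousAt g x) : HasDerivAt f (g x) x := by
  rw [hasDerivAt_iff_isLittleO, Asymptotics.isLittleO_iff]
  intro c hc0
  filter_upwards [Metric.continuousAt_iff'.1 hc c hc0] with z hz
  rw [Real.dist_eq] at hz
  have h1 := h x z
  have h2 := h z x
  have h3 : (g z - g x) * (z - x) ≤ c * |z - x| := by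
    refine (le_abs_self _).trans ?_
    rw [abs_mul]
    exact mul_le_mul_of_nonneg_right hz.le (abs_nonneg _)
  simp only [smul_eq_mul, Real.norm_eq_abs]
  rw [abs_le]
  constructor <;> nlinarith [mul_nonneg hc0.le (abs_nonneg (z - x))]

/-- Differentiation of `h ↦ E[ψ(Y + h Z)]` at `0`. -/
lemma aux_deriv_integral (P : Measure Ω) (f g : ℝ → ℝ)
    (h : ∀ x z, g x * (z - x) ≤ f z - f x) (Y Z : Ω → ℝ)
    (hY : AEMeasurable Y P) (hZ : AEMeasurable Z P)
    (hint : ∀ s : ℝ, Integrable (fun ω => f (Y ω + s * Z ω)) P)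
    (hd : ∀ᵐ ω ∂P, HasDerivAt f (g (Y ω)) (Y ω)) :
    Integrable (fun ω => g (Y ω) * Z ω) P ∧
    HasDerivAt (fun s : ℝ => ∫ ω, f (Y ω + s * Z ω) ∂P) (∫ ω, g (Y ω) * Z ω ∂P) 0 := by
  refine hasDerivAt_integral_of_dominated_loc_of_lip (s := Set.Icc (-1 : ℝ) 1)
    (bound := fun ω => |f (Y ω + 2 * Z ω) - f (Y ω + 1 * Z ω)|
      + |f (Y ω + (-1) * Z ω) - f (Y ω + (-2) * Z ω)|)
    (Icc_mem_nhds (by norm_num) (by norm_num)) ?_ (hint 0) ?_ ?_ ?_ ?_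
  · exact Filter.Eventually.of_forall fun s => (hint s).aestronglyMeasurable
  · exact (((aux_mono f g h).measurable.comp_aemeasurable hY).mul hZ).aestronglyMeasurable
  · refine Filter.Eventually.of_forall fun ω => ?_
    refine LipschitzOnWith.of_dist_le_mul fun x hx z hz => ?_
    rw [Real.coe_nnabs, abs_of_nonneg (by positivity), Real.dist_eq, Real.dist_eq]
    refine aux_lip (fun s => f (Y ω + s * Z ω)) (fun s => g (Y ω + s * Z ω) * Z ω) ?_ x z hx hz
    intro a b
    have := h (Y ω + a * Z ω) (Y ω + b * Z ω)
    linarith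
  · exact ((hint 2).sub (hint 1)).abs.add ((hint (-1)).sub (hint (-2))).abs
  · filter_upwards [hd] with ω hω
    have h1 : HasDerivAt (fun s : ℝ => Y ω + s * Z ω) (1 * Z ω) 0 :=
      ((hasDerivAt_id (0 : ℝ)).mul_const (Z ω)).const_add (Y ω)
    have h2 : HasDerivAt f (g (Y ω)) (Y ω + 0 * Z ω) := by simpa using hω
    have := h2.comp (0 : ℝ) h1
    rw [one_mul] at this
    exact this

lemma aux_psi (φ : ℝ → EReal) (hφ : IsDivergenceFunction φ) :
    Monotone (psiR φ) ∧ (∀ y, y ≤ psiR φ y) ∧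
    (∀ x y, psiR φ (x + y) ≤ (psiR φ (2 * x) + psiR φ (2 * y)) / 2) := by
  refine ⟨?_, ?_, ?_⟩
  · intro x y hxy
    obtain ⟨z, hz, h⟩ := (aux_attained φ hφ x).1
    have := (aux_attained φ hφ y).2 z hz
    nlinarith [mul_le_mul_of_nonneg_right hxy hz]
  · intro y
    have := (aux_attained φ hφ y).2 1 zero_le_one
    rw [hφ.one] at this
    simpa using this
  · intro x y
    obtain ⟨z, hz, h⟩ := (aux_attained φ hφ (x + y)).1
    have h1 := (aux_attained φ hφ (2 * x)).2 z hz
    have h2 := (aux_attained φ hφ (2 * y)).2 z hz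
    linarith

lemma aux_sub (φ : ℝ → EReal) (hφ : IsDivergenceFunction φ) (y : ℝ) :
    ∃ z : ℝ, psiR φ y = y * z - (φ z).toReal ∧
      ∀ w, z * (w - y) ≤ psiR φ w - psiR φ y := by
  obtain ⟨z, hz, h⟩ := (aux_attained φ hφ y).1
  refine ⟨z, h, fun w => ?_⟩
  have := (aux_attained φ hφ w).2 z hz
  linarith

lemma aux_integrable (P : Measure Ω) [IsProbabilityMeasure P]
    (φ : ℝ → EReal) (hφ : IsDivergenceFunction φ)
    (X : Ω → ℝ) (hX : Integrable X P)
    (hXM : ∀ t : ℝ, 0 < t → Integrable (fun ω => psiR φ (t * |X ω|)) P) (s m : ℝ) :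
    Integrable (fun ω => psiR φ (X ω * s - m)) P := by
  obtain ⟨hm, hge, hmid⟩ := aux_psi φ hφ
  have hYi : Integrable (fun ω => X ω * s - m) P := (hX.mul_const s).sub (integrable_const m)
  have hU : Integrable (fun ω => (psiR φ ((2 * (|s| + 1)) * |X ω|) + psiR φ (2 * (-m))) / 2) P :=
    ((hXM _ (by positivity)).add (integrable_const _)).div_const 2
  refine integrable_of_le_of_le
    (hm.measurable.comp_aemeasurable hYi.aemeasurable).aestronglyMeasurable
    (Filter.Eventually.of_forall fun ω => hge _) (Filter.Eventually.of_forall fun ω => ?_) hYi hU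
  have h1 := hmid ((|s| + 1) * |X ω|) (-m)
  rw [← mul_assoc] at h1
  refine le_trans (hm ?_) h1
  have h2 : X ω * s ≤ |X ω| * |s| := by rw [← abs_mul]; exact le_abs_self _
  have := abs_nonneg (X ω)
  nlinarith

lemma aux_main (P : Measure Ω) [IsProbabilityMeasure P]
    (φ : ℝ → EReal) (hφ : IsDivergenceFunction φ) (β : ℝ)
    (X : Ω → ℝ) (hX : Integrable X P)
    (hXM : ∀ t : ℝ, 0 < t → Integrable (fun ω => psiR φ (t * |X ω|)) P)
    (μ t : ℝ) (ht : 0 < t) (hopt : rhoObj φ β P X μ t = rhoDiv φ β P X)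
    (g : ℝ → ℝ) (hg : ∀ x z : ℝ, g x * (z - x) ≤ psiR φ z - psiR φ x)
    (hd : ∀ᵐ ω ∂P, HasDerivAt (psiR φ) (g (X ω / t - μ)) (X ω / t - μ)) :
    Integrable (fun ω => g (X ω / t - μ)) P ∧
         (∫ ω, g (X ω / t - μ) ∂P) = 1 ∧
         Integrable (fun ω => (φ (g (X ω / t - μ))).toReal) P ∧
         (∫ ω, (φ (g (X ω / t - μ))).toReal ∂P) = β := by
  have hI := aux_integrable P φ hφ X hX hXM
  have hobj : ∀ m r : ℝ, rhoObj φ β P X m r =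
      ((r * (β + m + ∫ ω, psiR φ (X ω * r⁻¹ - m) ∂P) : ℝ) : EReal) := by
    intro m r
    have h1 := hI r⁻¹ m
    have h2 : (fun ω => psiR φ (X ω / r - m)) = fun ω => psiR φ (X ω * r⁻¹ - m) := by
      funext ω
      rw [div_eq_mul_inv]
    rw [rhoObj, h2, if_pos h1]
  have hle : ∀ m r : ℝ, 0 < r →
      t * (β + μ + ∫ ω, psiR φ (X ω * t⁻¹ - μ) ∂P) ≤
      r * (β + m + ∫ ω, psiR φ (X ω * r⁻¹ - m) ∂P) := by
    intro m r hr
    rw [← EReal.coe_le_coe_iff, ← hobj, ← hobj, hopt]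
    exact (iInf_le _ m).trans ((iInf_le _ r).trans (iInf_le _ hr))
  simp only [div_eq_mul_inv] at hd ⊢
  set s := t⁻¹ with hs
  have hs0 : 0 < s := inv_pos.2 ht
  have hts : t * s = 1 := mul_inv_cancel₀ ht.ne'
  set C := ∫ ω, psiR φ (X ω * s - μ) ∂P with hC
  have hYm : AEMeasurable (fun ω => X ω * s - μ) P :=
    (hX.aemeasurable.mul_const s).sub aemeasurable_const
  -- derivative in the direction of `μ`
  obtain ⟨i1, d1⟩ := aux_deriv_integral P (psiR φ) g hg (fun ω => X ω * s - μ) (fun _ => 1)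
    hYm aemeasurable_const (fun k => by
      convert hI s (μ - k) using 3
      ring) hd
  -- derivative in the direction of `1 / t`
  obtain ⟨i2, d2⟩ := aux_deriv_integral P (psiR φ) g hg (fun ω => X ω * s - μ) X
    hYm hX.aemeasurable (fun k => by
      convert hI (s + k) μ using 3
      ring) hd
  simp only [mul_one] at i1 d1
  have e1 : (∫ ω, g (X ω * s - μ) ∂P) = 1 := by
    have hmin : IsLocalMin (fun k : ℝ => (∫ ω, psiR φ (X ω * s - μ + k) ∂P) - k) 0 := by
      refine Filter.Eventually.of_forall fun k => ?_
      have h1 := hle (μ - k) t ht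
      have h2 := le_of_mul_le_mul_left h1 ht
      have h3 : (∫ ω, psiR φ (X ω * s - (μ - k)) ∂P) = ∫ ω, psiR φ (X ω * s - μ + k) ∂P := by
        congr 1; ext ω; congr 1; ring
      simp only [add_zero, sub_zero]
      rw [← hs, h3] at h2
      linarith
    have := hmin.hasDerivAt_eq_zero (d1.sub (hasDerivAt_id 0))
    linarith
  have e2 : s * (∫ ω, g (X ω * s - μ) * X ω ∂P) = β + μ + C := by
    have hmin : IsLocalMin (fun k : ℝ => (β + μ + ∫ ω, psiR φ (X ω * s - μ + k * X ω) ∂P)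
        - t * (β + μ + C) * (s + k)) 0 := by
      have hpos : ∀ᶠ k : ℝ in nhds 0, 0 < s + k := by
        have : Filter.Tendsto (fun k : ℝ => s + k) (nhds 0) (nhds (s + 0)) :=
          (continuous_const.add continuous_id).tendsto 0
        exact this.eventually (lt_mem_nhds (by simpa using hs0))
      filter_upwards [hpos] with k hk
      have h1 := hle μ (s + k)⁻¹ (inv_pos.2 hk)
      rw [inv_inv] at h1
      have h3 : (∫ ω, psiR φ (X ω * (s + k) - μ) ∂P) =
          ∫ ω, psiR φ (X ω * s - μ + k * X ω) ∂P := by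
        congr 1; ext ω; congr 1; ring
      rw [h3] at h1
      have h2 := mul_le_mul_of_nonneg_right h1 hk.le
      have h4 : (s + k)⁻¹ * (s + k) = 1 := inv_mul_cancel₀ hk.ne'
      have h5 : (s + k)⁻¹ * (β + μ + ∫ ω, psiR φ (X ω * s - μ + k * X ω) ∂P) * (s + k) =
          β + μ + ∫ ω, psiR φ (X ω * s - μ + k * X ω) ∂P := by
        rw [mul_right_comm, h4, one_mul]
      rw [h5] at h2
      simp only [zero_mul, add_zero]
      have h6 : t * (β + μ + C) * s = β + μ + C := by
        rw [mul_right_comm, hts, one_mul]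
      rw [h6]
      linarith
    have h7 : HasDerivAt (fun k : ℝ => t * (β + μ + C) * (s + k)) (t * (β + μ + C) * 1) 0 :=
      ((hasDerivAt_id (0 : ℝ)).const_add s).const_mul _
    have h8 := hmin.hasDerivAt_eq_zero ((d2.const_add (β + μ)).sub h7)
    have h9 : (∫ ω, g (X ω * s - μ) * X ω ∂P) = t * (β + μ + C) := by linarith
    rw [h9, ← mul_assoc, mul_comm s t, hts, one_mul]
  have hF : (fun ω => (φ (g (X ω * s - μ))).toReal) =ᵐ[P]
      fun ω => s * (g (X ω * s - μ) * X ω) - μ * g (X ω * s - μ) - psiR φ (X ω * s - μ) := by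
    filter_upwards [hd] with ω hω
    obtain ⟨z, hz, hz'⟩ := aux_sub φ hφ (X ω * s - μ)
    have := aux_uniq _ _ _ _ hω hz'
    rw [this]
    linarith
  have j1 : Integrable (fun ω => s * (g (X ω * s - μ) * X ω)) P := i2.const_mul s
  have j2 : Integrable (fun ω => μ * g (X ω * s - μ)) P := i1.const_mul μ
  have j3 := hI s μ
  have j4 : Integrable (fun ω => s * (g (X ω * s - μ) * X ω) - μ * g (X ω * s - μ)) P := j1.sub j2
  refine ⟨i1, e1, (integrable_congr hF).2 (j4.sub j3), ?_⟩
  rw [integral_congr_ae hF, integral_sub j4 j3, integral_sub j1 j2,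
    integral_const_mul, integral_const_mul, e1, e2]
  linarith

/-- Solvability of the characterizing equations: let `X ∈ M^ψ`, `X ≥ 0` a.s.,
`φ ∈ Δ₂`, and suppose the infimum defining `ρ_{φ,β}(X)` is attained at `t > 0`, `μ`.
If `ψ` is differentiable, then `E[ψ′(X/t − μ)] = 1` and `E[φ(ψ′(X/t − μ))] = β` for the
derivative `ψ′`; if `X` is continuously distributed, the same equations hold for every
subderivative `ψ′` of `ψ`. -/
theorem characterizing_equations_solvable (P : Measure Ω) [IsProbabilityMeasure P]
    (φ : ℝ → EReal) (hφ : IsDivergenceFunction φ) (hΔ : DeltaTwo φ) (β : ℝ) (hβ : 0 < β)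
    (X : Ω → ℝ) (hX : Integrable X P) (hX0 : ∀ᵐ ω ∂P, 0 ≤ X ω)
    (hXM : ∀ t : ℝ, 0 < t → Integrable (fun ω => psiR φ (t * |X ω|)) P)
    (μ t : ℝ) (ht : 0 < t) (hopt : rhoObj φ β P X μ t = rhoDiv φ β P X) :
    (Differentiable ℝ (psiR φ) →
      (Integrable (fun ω => deriv (psiR φ) (X ω / t - μ)) P ∧
       (∫ ω, deriv (psiR φ) (X ω / t - μ) ∂P) = 1 ∧
       Integrable (fun ω => (φ (deriv (psiR φ) (X ω / t - μ))).toReal) P ∧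
       (∫ ω, (φ (deriv (psiR φ) (X ω / t - μ))).toReal ∂P) = β)) ∧
    ((∀ x : ℝ, P {ω | X ω = x} = 0) →
      ∀ ψ' : ℝ → ℝ, (∀ x z : ℝ, ψ' x * (z - x) ≤ psiR φ z - psiR φ x) →
        (Integrable (fun ω => ψ' (X ω / t - μ)) P ∧
         (∫ ω, ψ' (X ω / t - μ) ∂P) = 1 ∧
         Integrable (fun ω => (φ (ψ' (X ω / t - μ))).toReal) P ∧
         (∫ ω, (φ (ψ' (X ω / t - μ))).toReal ∂P) = β)) := by
  refine ⟨fun hdiff => ?_, fun hcont ψ' hψ' => ?_⟩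
  · refine aux_main P φ hφ β X hX hXM μ t ht hopt _ ?_
      (Filter.Eventually.of_forall fun ω => (hdiff _).hasDerivAt)
    intro x z
    obtain ⟨p, _, hp⟩ := aux_sub φ hφ x
    rw [aux_uniq _ _ _ _ (hdiff x).hasDerivAt hp]
    exact hp z
  · refine aux_main P φ hφ β X hX hXM μ t ht hopt ψ' hψ' ?_
    have hcount := (aux_mono _ _ hψ').countable_not_continuousAt
    have h0 : ∀ᵐ ω ∂P, ∀ c ∈ {x | ¬ContinuousAt ψ' x}, X ω / t - μ ≠ c := by
      rw [ae_ball_iff hcount]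
      intro c _
      rw [ae_iff]
      refine measure_mono_null ?_ (hcont (t * (c + μ)))
      intro ω hω
      simp only [Set.mem_ofPred_eq, not_not, ne_eq] at hω ⊢
      rw [← hω]
      field_simp
      ring
    filter_upwards [h0] with ω hω
    refine aux_hasDeriv _ _ hψ' _ ?_
    by_contra hc
    exact hω _ hc rfl
end
end
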